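/- The Riemann hypothesis holds if and only if for every ε > 0 there exists a constant C such that for all real x ≥ 2, |π(x) − Li(x)| ≤ C·x^{1/2 + ε}. -/

import Mathlib

/-- The prime counting function `π(x)`: the number of primes `p ≤ x`, as a real number. -/
noncomputable def primePi (x : ℝ) : ℝ :=
  (((Finset.range (⌊x⌋₊ + 1)).filter Nat.Prime).card : ℝ)

/-- The logarithmic integral `Li(x) = ∫₂^x dt / log t`. -/
noncomputable def Li (x : ℝ) : ℝ := ∫ t in (2:ℝ)..x, 1 / Real.log t

/-!
Partial summation turns the bound on `π - Li` into the bound `ψ(x) - x = O(x^{1/2+ε})`, and by the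
functional equation the Riemann hypothesis says that `ζ` has no zeros with `re s > 1/2`. For any
`θ ≥ 1/2` the absence of zeros with `re s > θ` is equivalent to `ψ(x) - x = O(x^{θ+ε})`.

If `ψ(x) - x = O(x^{θ+ε})`, then `∫₁^∞ (ψ(t) - t) t^{-s-1} dt` is holomorphic for `re s > θ`. It
equals `-(ζ₁'/ζ₁ + 1)/s` for `re s > 1`, where `ζ₁(s) = (s - 1) ζ(s)`, so `ζ₁' = h ζ₁` with `h`
holomorphic for `re s > θ`, which leaves no room for a zero.

Conversely, if there are no zeros with `re s > θ`, the polynomial growth of `ζ₁` and the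
Borel–Carathéodory inequality give `ζ₁'/ζ₁ = O(|s|^η)` for every `η > 0` on closed strips to the
right of `θ`. Mellin inversion for the primitive of `ψ(t) - t` converges absolutely and may be
shifted to `re s = θ + δ`. As `ψ` is constant on `[n, n + 1)`, differencing the primitive there
recovers `ψ(n)` exactly, and interpolating between the two bounds `O(n^{re s})` and
`O(n^{re s + 1} / |s|)` for `((n + 1)^{s+1} - n^{s+1}) / (s + 1)` keeps the integral convergent.
-/

/-! ### Growth order of real functions -/

/-- `f` has growth order at most `θ` on `[2, ∞)`, i.e. `f(x) = O(x^{θ+ε})` for every `ε > 0`. -/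
def GrowthOrderLE (θ : ℝ) (f : ℝ → ℝ) : Prop :=
  ∀ ε : ℝ, 0 < ε → ∃ C : ℝ, ∀ x : ℝ, 2 ≤ x → |f x| ≤ C * x ^ (θ + ε)

namespace GrowthOrderLE

open Real Set MeasureTheory

variable {θ : ℝ} {f g : ℝ → ℝ}

lemma exists_pos_bound (hf : GrowthOrderLE θ f) {ε : ℝ} (hε : 0 < ε) :
    ∃ C : ℝ, 0 < C ∧ ∀ x : ℝ, 2 ≤ x → |f x| ≤ C * x ^ (θ + ε) := by
  obtain ⟨C, hC⟩ := hf ε hε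
  refine ⟨max C 1, by positivity, fun x hx => (hC x hx).trans ?_⟩
  gcongr
  exact le_max_left C 1

lemma of_le_rpow {a K : ℝ} (ha : a ≤ θ) (h : ∀ x, 2 ≤ x → |f x| ≤ K * x ^ a) :
    GrowthOrderLE θ f := by
  refine fun ε hε => ⟨|K|, fun x hx => (h x hx).trans ?_⟩
  have hx1 : 1 ≤ x := by linarith
  gcongr
  · exact le_abs_self K
  · linarith

lemma const (hθ : 0 ≤ θ) (c : ℝ) : GrowthOrderLE θ fun _ => c :=
  of_le_rpow (K := |c|) hθ fun x _ => by simp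

lemma of_le {K : ℝ} (hf : GrowthOrderLE θ f) (h : ∀ x, 2 ≤ x → |g x| ≤ K * |f x|) :
    GrowthOrderLE θ g := by
  intro ε hε
  obtain ⟨C, hC⟩ := hf ε hε
  refine ⟨|K| * C, fun x hx => ?_⟩
  calc |g x| ≤ |K| * |f x| := (h x hx).trans (by gcongr; exact le_abs_self K)
    _ ≤ |K| * (C * x ^ (θ + ε)) := by gcongr; exact hC x hx
    _ = |K| * C * x ^ (θ + ε) := by ring

lemma congr (hf : GrowthOrderLE θ f) (h : ∀ x, 2 ≤ x → g x = f x) : GrowthOrderLE θ g :=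
  hf.of_le (K := 1) fun x hx => by rw [h x hx, one_mul]

lemma neg (hf : GrowthOrderLE θ f) : GrowthOrderLE θ fun x => -f x :=
  hf.of_le (K := 1) fun x _ => by rw [abs_neg, one_mul]

lemma add (hf : GrowthOrderLE θ f) (hg : GrowthOrderLE θ g) :
    GrowthOrderLE θ fun x => f x + g x := by
  intro ε hε
  obtain ⟨C, hC⟩ := hf ε hε
  obtain ⟨D, hD⟩ := hg ε hε
  refine ⟨C + D, fun x hx => ?_⟩
  rw [add_mul]
  exact (abs_add_le _ _).trans (add_le_add (hC x hx) (hD x hx))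

lemma mul_log (hf : GrowthOrderLE θ f) : GrowthOrderLE θ fun x => f x * log x := by
  intro ε hε
  obtain ⟨C, hC0, hC⟩ := hf.exists_pos_bound (half_pos hε)
  refine ⟨C / (ε / 2), fun x hx => ?_⟩
  have hx0 : 0 < x := by linarith
  have hlog : 0 ≤ log x := log_nonneg (by linarith)
  rw [abs_mul, abs_of_nonneg hlog]
  calc |f x| * log x ≤ C * x ^ (θ + ε / 2) * (x ^ (ε / 2) / (ε / 2)) := by
        gcongr
        exacts [hC x hx, log_le_rpow_div hx0.le (half_pos hε)]
    _ = C / (ε / 2) * (x ^ (θ + ε / 2) * x ^ (ε / 2)) := by ring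
    _ = C / (ε / 2) * x ^ (θ + ε) := by rw [← rpow_add hx0]; ring_nf

lemma integral {K : ℝ} (hθ : 0 ≤ θ) (hf : GrowthOrderLE θ f)
    (h : ∀ t, 2 ≤ t → |g t| ≤ K * (|f t| / t)) :
    GrowthOrderLE θ fun x => ∫ t in (2 : ℝ)..x, g t := by
  intro ε hε
  obtain ⟨C, hC0, hC⟩ := hf.exists_pos_bound hε
  refine ⟨|K| * C / (θ + ε), fun x hx => ?_⟩
  have hbound : ∀ t ∈ Ioc 2 x, ‖g t‖ ≤ |K| * C * t ^ (θ + ε - 1) := fun t ht => by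
    have ht0 : 0 < t := by linarith [ht.1]
    calc |g t| ≤ |K| * (|f t| / t) := (h t ht.1.le).trans (by gcongr; exact le_abs_self K)
      _ ≤ |K| * (C * t ^ (θ + ε) / t) := by gcongr; exact hC t ht.1.le
      _ = |K| * C * t ^ (θ + ε - 1) := by rw [rpow_sub_one ht0.ne']; ring
  calc |∫ t in (2 : ℝ)..x, g t| ≤ ∫ t in (2 : ℝ)..x, |K| * C * t ^ (θ + ε - 1) :=
        intervalIntegral.norm_integral_le_of_norm_le hx (ae_of_all _ hbound)
          ((intervalIntegral.intervalIntegrable_rpow' (by linarith)).const_mul _)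
    _ = |K| * C * ((x ^ (θ + ε) - 2 ^ (θ + ε)) / (θ + ε)) := by
        rw [intervalIntegral.integral_const_mul, integral_rpow (Or.inl (by linarith)),
          sub_add_cancel]
    _ ≤ |K| * C * (x ^ (θ + ε) / (θ + ε)) := by
        gcongr
        exact sub_le_self _ (by positivity)
    _ = |K| * C / (θ + ε) * x ^ (θ + ε) := by ring

end GrowthOrderLE

/-! ### From `π - Li` to `ψ - id` -/

section PrimeCounting

open Real Set MeasureTheory

lemma primePi_eq_primeCounting (x : ℝ) : primePi x = Nat.primeCounting ⌊x⌋₊ := by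
  rw [primePi, Nat.primeCounting, Nat.primeCounting', Nat.count_eq_card_filter_range]

lemma primePi_mono : Monotone primePi := fun a b hab => by
  rw [primePi_eq_primeCounting, primePi_eq_primeCounting]
  exact_mod_cast Nat.monotone_primeCounting (Nat.floor_mono hab)

lemma continuousOn_one_div_log : ContinuousOn (fun t : ℝ => 1 / log t) (Ioi 1) := fun _ ht =>
  (continuousAt_const.div (continuousAt_log (zero_lt_one.trans ht).ne')
    (log_pos ht).ne').continuousWithinAt

lemma uIcc_two_subset_Ioi_one {x : ℝ} (hx : 1 < x) : uIcc 2 x ⊆ Ioi 1 := fun _ ht =>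
  (lt_min one_lt_two hx).trans_le ht.1

lemma intervalIntegrable_one_div_log {x : ℝ} (hx : 1 < x) :
    IntervalIntegrable (fun t : ℝ => 1 / log t) volume 2 x :=
  (continuousOn_one_div_log.mono (uIcc_two_subset_Ioi_one hx)).intervalIntegrable

lemma hasDerivAt_Li {x : ℝ} (hx : 1 < x) : HasDerivAt Li (1 / log x) x :=
  intervalIntegral.integral_hasDerivAt_right (intervalIntegrable_one_div_log hx)
    (Measurable.stronglyMeasurable (by fun_prop)).stronglyMeasurableAtFilter
    (continuousOn_one_div_log.continuousAt (Ioi_mem_nhds hx))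

lemma continuousOn_Li : ContinuousOn Li (Ioi 1) := fun _ hx =>
  (hasDerivAt_Li hx).continuousAt.continuousWithinAt

lemma Li_two : Li 2 = 0 := intervalIntegral.integral_same

lemma Li_eq_div_log_add_integral {x : ℝ} (hx : 1 < x) :
    Li x = x / log x - 2 / log 2 + ∫ t in (2 : ℝ)..x, 1 / log t ^ 2 := by
  have hderiv : ∀ t ∈ uIcc 2 x,
      HasDerivAt (fun t : ℝ => t / log t) (1 / log t - 1 / log t ^ 2) t := fun t ht => by
    have ht1 : 1 < t := uIcc_two_subset_Ioi_one hx ht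
    have hlog : log t ≠ 0 := (log_pos ht1).ne'
    have ht0 : t ≠ 0 := by linarith
    refine ((hasDerivAt_id t).div (hasDerivAt_log ht0) hlog).congr_deriv ?_
    simp only [id]
    field_simp
  have hlog := intervalIntegrable_one_div_log hx
  have hlog_sq := Chebyshev.intervalIntegrable_one_div_log_sq one_lt_two hx
  have hftc := intervalIntegral.integral_eq_sub_of_hasDerivAt hderiv (hlog.sub hlog_sq)
  rw [intervalIntegral.integral_sub hlog hlog_sq] at hftc
  rw [Li]
  linarith

lemma intervalIntegrable_Li_div {x : ℝ} (hx : 1 < x) :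
    IntervalIntegrable (fun t => Li t / t) volume 2 x :=
  ((continuousOn_Li.div continuousOn_id fun _ ht => (zero_lt_one.trans ht).ne').mono
    (uIcc_two_subset_Ioi_one hx)).intervalIntegrable

lemma intervalIntegrable_primePi_div {x : ℝ} (hx : 1 < x) :
    IntervalIntegrable (fun t => primePi t / t) volume 2 x := by
  simp_rw [div_eq_mul_inv]
  refine primePi_mono.intervalIntegrable.mul_continuousOn (continuousOn_inv₀.mono fun t ht => ?_)
  exact (zero_lt_one.trans (uIcc_two_subset_Ioi_one hx ht)).ne'

lemma Li_mul_log_eq_add_integral {x : ℝ} (hx : 1 < x) :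
    Li x * log x = x - 2 + ∫ t in (2 : ℝ)..x, Li t / t := by
  have hderiv : ∀ t ∈ uIcc 2 x, HasDerivAt (fun t => Li t * log t) (1 + Li t / t) t :=
    fun t ht => by
      have ht1 : 1 < t := uIcc_two_subset_Ioi_one hx ht
      refine ((hasDerivAt_Li ht1).mul (hasDerivAt_log (by linarith))).congr_deriv ?_
      rw [one_div_mul_cancel (log_pos ht1).ne', div_eq_mul_inv]
  have hinteg := intervalIntegrable_Li_div hx
  have hftc := intervalIntegral.integral_eq_sub_of_hasDerivAt hderiv
    (intervalIntegrable_const.add hinteg)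
  rw [intervalIntegral.integral_add intervalIntegrable_const hinteg,
    intervalIntegral.integral_const, Li_two, smul_eq_mul] at hftc
  linarith

lemma primePi_sub_Li_eq {x : ℝ} (hx : 2 ≤ x) :
    primePi x - Li x = (Chebyshev.theta x - x) / log x +
      (∫ t in (2 : ℝ)..x, (Chebyshev.theta t - t) / (t * log t ^ 2)) + 2 / log 2 := by
  have hx1 : 1 < x := by linarith
  have htheta : IntervalIntegrable (fun t => Chebyshev.theta t / (t * log t ^ 2)) volume 2 x := by
    rw [intervalIntegrable_iff_integrableOn_Icc_of_le hx]
    exact Chebyshev.integrableOn_theta_div_id_mul_log_sq x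
  have hsplit : ∫ t in (2 : ℝ)..x, (Chebyshev.theta t - t) / (t * log t ^ 2) =
      (∫ t in (2 : ℝ)..x, Chebyshev.theta t / (t * log t ^ 2)) -
        ∫ t in (2 : ℝ)..x, 1 / log t ^ 2 := by
    rw [← intervalIntegral.integral_sub htheta
      (Chebyshev.intervalIntegrable_one_div_log_sq one_lt_two hx1)]
    refine intervalIntegral.integral_congr fun t ht => ?_
    have ht0 : t ≠ 0 := (zero_lt_one.trans (uIcc_two_subset_Ioi_one hx1 ht)).ne'
    change _ = Chebyshev.theta t / (t * log t ^ 2) - 1 / log t ^ 2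
    rw [sub_div, div_mul_cancel_left₀ ht0, one_div]
  rw [primePi_eq_primeCounting, Chebyshev.primeCounting_eq_theta_div_log_add_integral hx,
    Li_eq_div_log_add_integral hx1, hsplit]
  ring

lemma theta_sub_self_eq {x : ℝ} (hx : 2 ≤ x) :
    Chebyshev.theta x - x = (primePi x - Li x) * log x +
      -(∫ t in (2 : ℝ)..x, (primePi t - Li t) / t) + -2 := by
  have hx1 : 1 < x := by linarith
  have htheta := Chebyshev.theta_eq_primeCounting_mul_log_sub_integral hx
  simp_rw [← primePi_eq_primeCounting] at htheta
  simp_rw [sub_div]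
  rw [intervalIntegral.integral_sub (intervalIntegrable_primePi_div hx1)
    (intervalIntegrable_Li_div hx1), htheta, sub_mul, Li_mul_log_eq_add_integral hx1]
  ring

variable {θ : ℝ}

lemma growthOrderLE_theta_sub_self_iff (hθ : 0 ≤ θ) :
    GrowthOrderLE θ (fun x => Chebyshev.theta x - x) ↔
      GrowthOrderLE θ fun x => primePi x - Li x := by
  refine ⟨fun h => ?_, fun h => ?_⟩
  · have hdiv : GrowthOrderLE θ fun x => (Chebyshev.theta x - x) / log x :=
      h.of_le (K := 1 / log 2) fun x hx => by
        rw [abs_div, abs_of_pos (log_pos (by linarith)), div_mul_eq_mul_div, one_mul]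
        gcongr
    have hinteg : GrowthOrderLE θ fun x =>
        ∫ t in (2 : ℝ)..x, (Chebyshev.theta t - t) / (t * log t ^ 2) :=
      h.integral (K := 1 / log 2 ^ 2) hθ fun t ht => by
        have hlog : 0 < log t := log_pos (by linarith)
        rw [abs_div, abs_of_pos (a := t * log t ^ 2) (by positivity), div_mul_div_comm, one_mul,
          mul_comm t]
        gcongr
    exact ((hdiv.add hinteg).add (.const hθ _)).congr fun x hx => primePi_sub_Li_eq hx
  · have hinteg : GrowthOrderLE θ fun x => ∫ t in (2 : ℝ)..x, (primePi t - Li t) / t :=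
      h.integral (K := 1) hθ fun t ht => by
        rw [abs_div, abs_of_pos (show 0 < t by linarith), one_mul]
    exact ((h.mul_log.add hinteg.neg).add (.const hθ _)).congr fun x hx => theta_sub_self_eq hx

lemma growthOrderLE_psi_sub_theta (hθ : 1 / 2 ≤ θ) :
    GrowthOrderLE θ fun x => Chebyshev.psi x - Chebyshev.theta x := by
  obtain ⟨C, hC⟩ := Chebyshev.psi_sub_theta_le_mul_sqrt
  refine .of_le_rpow (K := C) hθ fun x _ => ?_
  rw [abs_of_nonneg (sub_nonneg.2 (Chebyshev.theta_le_psi x)), ← sqrt_eq_rpow]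
  exact hC x

lemma growthOrderLE_psi_sub_self_iff (hθ : 1 / 2 ≤ θ) :
    GrowthOrderLE θ (fun x => Chebyshev.psi x - x) ↔
      GrowthOrderLE θ fun x => primePi x - Li x := by
  have hdiff := growthOrderLE_psi_sub_theta hθ
  rw [← growthOrderLE_theta_sub_self_iff (by linarith)]
  exact ⟨fun h => (h.add hdiff.neg).congr fun x _ => by ring,
    fun h => (h.add hdiff).congr fun x _ => by ring⟩

end PrimeCounting

/-! ### The Mellin transform over `(1, ∞)` -/

/-- The Mellin transform of `f` restricted to `(1, ∞)`, evaluated at `-s`. In this normalisation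
the Dirichlet series `∑ aₙ n⁻ˢ` is `s` times the transform of its summatory function. -/
noncomputable def tailMellin (f : ℝ → ℂ) (s : ℂ) : ℂ :=
  ∫ t in Set.Ioi (1 : ℝ), f t * (t : ℂ) ^ (-(s + 1))

section TailMellin

open Complex Set Filter Topology MeasureTheory

lemma cpow_smul_indicator_eq (f : ℝ → ℂ) (s : ℂ) :
    (fun t : ℝ => (t : ℂ) ^ (-s - 1) • (Ioi 1).indicator f t) =
      (Ioi 1).indicator fun t : ℝ => f t * (t : ℂ) ^ (-(s + 1)) := by
  ext t
  by_cases ht : t ∈ Ioi (1 : ℝ)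
  · rw [indicator_of_mem ht, indicator_of_mem ht, smul_eq_mul, mul_comm, neg_add, sub_eq_add_neg]
  · rw [indicator_of_notMem ht, indicator_of_notMem ht, smul_zero]

lemma tailMellin_eq_mellin (f : ℝ → ℂ) (s : ℂ) :
    tailMellin f s = mellin ((Ioi 1).indicator f) (-s) := by
  rw [tailMellin, mellin, cpow_smul_indicator_eq, setIntegral_indicator measurableSet_Ioi,
    Ioi_inter_Ioi, sup_of_le_right zero_le_one]

lemma tailMellin_id {s : ℂ} (hs : 1 < s.re) : tailMellin (fun t => (t : ℂ)) s = 1 / (s - 1) := by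
  have hcongr : ∀ t ∈ Ioi (1 : ℝ), (t : ℂ) * (t : ℂ) ^ (-(s + 1)) = (t : ℂ) ^ (-s) :=
    fun t ht => by
      have ht0 : (t : ℂ) ≠ 0 := ofReal_ne_zero.2 (zero_lt_one.trans ht).ne'
      rw [neg_add, cpow_add _ _ ht0, cpow_neg_one, mul_left_comm, mul_inv_cancel₀ ht0, mul_one]
  rw [tailMellin, setIntegral_congr_fun measurableSet_Ioi hcongr,
    integral_Ioi_cpow_of_lt (by simpa using hs) one_pos, ofReal_one, one_cpow, neg_add_eq_sub,
    ← neg_sub s 1, neg_div_neg_eq]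

lemma isBigO_nhdsGT_zero_indicator_Ioi_one (f : ℝ → ℂ) (b : ℝ) :
    (Ioi 1).indicator f =O[𝓝[>] 0] fun t : ℝ => t ^ (-b) := by
  have hzero : (Ioi 1).indicator f =ᶠ[𝓝[>] 0] fun _ => 0 := by
    filter_upwards [mem_nhdsWithin_of_mem_nhds (Iio_mem_nhds one_pos)] with t ht
    exact indicator_of_notMem (not_lt_of_gt ht) f
  exact hzero.trans_isBigO (Asymptotics.isBigO_zero _ _)

lemma hasDerivAt_ofReal_cpow_neg (s : ℂ) {t : ℝ} (ht : 0 < t) :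
    HasDerivAt (fun t : ℝ => (t : ℂ) ^ (-s)) (-s * (t : ℂ) ^ (-(s + 1))) t := by
  have hderiv := (hasDerivAt_id (t : ℂ)).cpow_const (c := -s) (Or.inl (by simpa using ht))
  refine hderiv.comp_ofReal.congr_deriv ?_
  rw [id, mul_one, neg_add, sub_eq_add_neg]

variable {f g : ℝ → ℂ} {C D a : ℝ} {s : ℂ}

lemma integral_mul_cpow_eq_add_integral_primitive_mul_cpow (hf : LocallyIntegrable f)
    (hright : ∀ t, 1 < t → ContinuousWithinAt f (Ioi t) t) {T : ℝ} (hT : 1 ≤ T) :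
    ∫ t in 1..T, f t * (t : ℂ) ^ (-s) = (∫ t in 1..T, f t) * (T : ℂ) ^ (-s) +
      s * ∫ x in 1..T, (∫ t in 1..x, f t) * (x : ℂ) ^ (-(s + 1)) := by
  have hinteg (x y : ℝ) : IntervalIntegrable f volume x y :=
    (hf.integrableOn_isCompact isCompact_uIcc).intervalIntegrable
  have hpos (t : ℝ) (ht : t ∈ uIcc 1 T) : 0 < t := by
    rw [uIcc_of_le hT] at ht
    exact one_pos.trans_le ht.1
  have hcpow (r : ℂ) : ContinuousOn (fun t : ℝ => (t : ℂ) ^ (-r)) (uIcc 1 T) := fun t ht =>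
    (hasDerivAt_ofReal_cpow_neg r (hpos t ht)).continuousAt.continuousWithinAt
  have hprim : ContinuousOn (fun x => ∫ t in 1..x, f t) (uIcc 1 T) :=
    (intervalIntegral.continuous_primitive hinteg 1).continuousOn
  have hparts := intervalIntegral.integral_mul_deriv_eq_deriv_mul_of_hasDeriv_right
    (u := fun x => ∫ t in 1..x, f t) (v := fun t : ℝ => (t : ℂ) ^ (-s)) (u' := f)
    (v' := fun t : ℝ => -s * (t : ℂ) ^ (-(s + 1))) hprim (hcpow s) (fun t ht => ?_)
    (fun t ht => (hasDerivAt_ofReal_cpow_neg s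
      (hpos t (Ioo_subset_Icc_self ht))).hasDerivWithinAt)
    (hinteg 1 T) ((continuousOn_const.mul (hcpow (s + 1))).intervalIntegrable)
  · rw [intervalIntegral.integral_same, zero_mul, sub_zero] at hparts
    simp_rw [mul_left_comm _ (-s), intervalIntegral.integral_const_mul] at hparts
    linear_combination hparts
  · rw [min_eq_left hT] at ht
    exact (intervalIntegral.integral_hasDerivWithinAt_right (hinteg 1 t)
      (hf.aestronglyMeasurable.stronglyMeasurableAtFilter) (hright t ht.1)).mono Ioi_subset_Ici_self

section Bound

variable (hfb : ∀ t, 1 < t → ‖f t‖ ≤ C * t ^ a)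
include hfb

lemma norm_mul_cpow_le {t : ℝ} (ht : 1 < t) :
    ‖f t * (t : ℂ) ^ (-s)‖ ≤ C * t ^ (a - s.re) := by
  have ht0 : 0 < t := one_pos.trans ht
  rw [norm_mul, norm_cpow_eq_rpow_re_of_pos ht0, neg_re, sub_eq_add_neg, Real.rpow_add ht0,
    ← mul_assoc]
  gcongr
  exact hfb t ht

lemma const_nonneg_of_norm_le_mul_rpow : 0 ≤ C :=
  nonneg_of_mul_nonneg_left ((norm_nonneg _).trans (hfb 2 one_lt_two)) (by positivity)

lemma norm_tailMellin_le (hs : a < s.re) : ‖tailMellin f s‖ ≤ C / (s.re - a) := by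
  have hbound : ∀ t ∈ Ioi (1 : ℝ), ‖f t * (t : ℂ) ^ (-(s + 1))‖ ≤ C * t ^ (a - (s.re + 1)) :=
    fun t ht => norm_mul_cpow_le hfb ht
  have hexp : a - (s.re + 1) < -1 := by linarith
  calc ‖tailMellin f s‖ ≤ ∫ t in Ioi (1 : ℝ), C * t ^ (a - (s.re + 1)) :=
        norm_integral_le_of_norm_le ((integrableOn_Ioi_rpow_of_lt hexp one_pos).const_mul C)
          (ae_restrict_of_forall_mem measurableSet_Ioi hbound)
    _ = C / (s.re - a) := by
        rw [integral_const_mul, integral_Ioi_rpow_of_lt hexp one_pos, Real.one_rpow,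
          show a - (s.re + 1) + 1 = -(s.re - a) by ring, neg_div_neg_eq, mul_one_div]

lemma isBigO_atTop_indicator_Ioi_one :
    (Ioi 1).indicator f =O[atTop] fun t : ℝ => t ^ (-(-a)) := by
  refine Asymptotics.IsBigO.of_bound C ?_
  filter_upwards [eventually_gt_atTop 1] with t ht
  rw [indicator_of_mem (mem_Ioi.2 ht), neg_neg, Real.norm_of_nonneg (by positivity)]
  exact hfb t ht

variable (hf : AEStronglyMeasurable f (volume.restrict (Ioi 1)))
include hf

lemma locallyIntegrableOn_indicator_Ioi_one :
    LocallyIntegrableOn ((Ioi 1).indicator f) (Ioi 0) := by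
  have hC := const_nonneg_of_norm_le_mul_rpow hfb
  have hpow : LocallyIntegrableOn (fun t : ℝ => C * t ^ a) (Ioi 0) :=
    ContinuousOn.locallyIntegrableOn (fun t ht => (continuousAt_const.mul
      (Real.continuousAt_rpow_const _ _ (Or.inl (ne_of_gt ht)))).continuousWithinAt)
      measurableSet_Ioi
  rw [locallyIntegrableOn_iff isOpen_Ioi.isLocallyClosed] at hpow ⊢
  refine fun K hK hKc => (hpow K hK hKc).mono'
    ((aestronglyMeasurable_indicator_iff measurableSet_Ioi).2 hf).restrict
    (ae_restrict_of_forall_mem hKc.measurableSet fun t ht => ?_)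
  have ht0 : 0 < t := hK ht
  rw [norm_indicator_eq_indicator_norm]
  exact indicator_apply_le' (hfb t) fun _ => by positivity

lemma mellinConvergent_indicator_Ioi_one (hs : a < s.re) :
    MellinConvergent ((Ioi 1).indicator f) (-s) :=
  mellinConvergent_of_isBigO_rpow (locallyIntegrableOn_indicator_Ioi_one hfb hf)
    (isBigO_atTop_indicator_Ioi_one hfb) (by simpa using hs)
    (isBigO_nhdsGT_zero_indicator_Ioi_one f _) (sub_one_lt _)

lemma differentiableAt_tailMellin (hs : a < s.re) : DifferentiableAt ℂ (tailMellin f) s := by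
  rw [funext (tailMellin_eq_mellin f)]
  exact (mellin_differentiableAt_of_isBigO_rpow (locallyIntegrableOn_indicator_Ioi_one hfb hf)
    (isBigO_atTop_indicator_Ioi_one hfb) (by simpa using hs)
    (isBigO_nhdsGT_zero_indicator_Ioi_one f _) (sub_one_lt _)).comp s differentiableAt_id.neg

lemma integrableOn_mul_cpow (hs : a < s.re) :
    IntegrableOn (fun t : ℝ => f t * (t : ℂ) ^ (-(s + 1))) (Ioi 1) := by
  have hconv := mellinConvergent_indicator_Ioi_one hfb hf hs
  rw [MellinConvergent, cpow_smul_indicator_eq, integrableOn_indicator_iff measurableSet_Ioi,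
    Ioi_inter_Ioi, sup_of_le_left zero_le_one] at hconv
  exact hconv

lemma tailMellin_sub (hgb : ∀ t, 1 < t → ‖g t‖ ≤ D * t ^ a)
    (hg : AEStronglyMeasurable g (volume.restrict (Ioi 1))) (hs : a < s.re) :
    tailMellin (fun t => f t - g t) s = tailMellin f s - tailMellin g s := by
  simp_rw [tailMellin, sub_mul]
  exact integral_sub (integrableOn_mul_cpow hfb hf hs) (integrableOn_mul_cpow hgb hg hs)

lemma eq_integral_tailMellin {c x : ℝ} (hc : a < c)
    (hinteg : Integrable fun y : ℝ => tailMellin f (c + y * I)) (hx : 1 < x)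
    (hcont : ContinuousAt f x) :
    f x = (1 / (2 * Real.pi)) • ∫ y : ℝ, (x : ℂ) ^ (c + y * I) * tailMellin f (c + y * I) := by
  have hmellin (y : ℝ) : mellin ((Ioi 1).indicator f) (((-c : ℝ) : ℂ) + (-y : ℝ) * I) =
      tailMellin f (c + y * I) := by
    rw [tailMellin_eq_mellin]
    congr 1
    push_cast
    ring
  have hvert : VerticalIntegrable (mellin ((Ioi 1).indicator f)) (-c) :=
    hinteg.comp_neg.congr (ae_of_all _ fun y => by
      simp_rw [← hmellin, neg_neg])
  have hconv : MellinConvergent ((Ioi 1).indicator f) ((-c : ℝ) : ℂ) := by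
    rw [ofReal_neg]
    exact mellinConvergent_indicator_Ioi_one hfb hf (by simpa using hc)
  have hcont' : ContinuousAt ((Ioi 1).indicator f) x :=
    hcont.congr (eqOn_indicator.symm.eventuallyEq_of_mem (Ioi_mem_nhds hx))
  rw [← indicator_of_mem (mem_Ioi.2 hx) f,
    ← mellinInv_mellin_eq (-c) _ (one_pos.trans hx) hconv hvert hcont', mellinInv,
    ← integral_neg_eq_self]
  congr 2
  ext y
  rw [hmellin, smul_eq_mul]
  congr 2
  push_cast
  ring

end Bound

section Primitive

variable (ha : 0 ≤ a) (hfb : ∀ t, 1 < t → ‖f t‖ ≤ C * t ^ a)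
include ha hfb

lemma norm_primitive_le {x : ℝ} (hx : 1 < x) : ‖∫ t in 1..x, f t‖ ≤ C * x ^ (a + 1) := by
  have hC := const_nonneg_of_norm_le_mul_rpow hfb
  have hx0 : 0 < x := one_pos.trans hx
  calc ‖∫ t in 1..x, f t‖ ≤ C * x ^ a * |x - 1| :=
        intervalIntegral.norm_integral_le_of_norm_le_const fun t ht => by
          rw [uIoc_of_le hx.le] at ht
          refine (hfb t ht.1).trans ?_
          have ht0 : 0 ≤ t := zero_le_one.trans ht.1.le
          gcongr
          exact ht.2
    _ ≤ C * x ^ a * x := by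
        gcongr
        rw [abs_of_pos (sub_pos.2 hx)]
        exact sub_le_self _ zero_le_one
    _ = C * x ^ (a + 1) := by rw [Real.rpow_add_one hx0.ne', mul_assoc]

lemma tendsto_primitive_mul_cpow (hs : a < s.re) :
    Tendsto (fun T : ℝ => (∫ t in 1..T, f t) * (T : ℂ) ^ (-(s + 1))) atTop (𝓝 0) := by
  have hdecay : Tendsto (fun T : ℝ => C * T ^ (-(s.re - a))) atTop (𝓝 0) := by
    simpa using (tendsto_rpow_neg_atTop (sub_pos.2 hs)).const_mul C
  refine squeeze_zero_norm' ?_ hdecay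
  filter_upwards [eventually_gt_atTop 1] with T hT
  refine (norm_mul_cpow_le (fun _ => norm_primitive_le ha hfb) hT).trans_eq ?_
  rw [add_re, one_re]
  ring_nf

lemma tailMellin_eq_mul_tailMellin_primitive (hf : LocallyIntegrable f)
    (hright : ∀ t, 1 < t → ContinuousWithinAt f (Ioi t) t) (hs : a < s.re) :
    tailMellin f s = (s + 1) * tailMellin (fun x => ∫ t in 1..x, f t) (s + 1) := by
  have hprim : Continuous fun x => ∫ t in 1..x, f t :=
    intervalIntegral.continuous_primitive
      (fun _ _ => (hf.integrableOn_isCompact isCompact_uIcc).intervalIntegrable) 1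
  have hlim := intervalIntegral_tendsto_integral_Ioi 1
    (integrableOn_mul_cpow hfb hf.aestronglyMeasurable.restrict hs) tendsto_id
  have hlim_prim := intervalIntegral_tendsto_integral_Ioi 1
    (integrableOn_mul_cpow (s := s + 1) (fun _ => norm_primitive_le ha hfb)
      hprim.aestronglyMeasurable (by simpa using hs)) tendsto_id
  refine tendsto_nhds_unique hlim ?_
  have hsum := (tendsto_primitive_mul_cpow ha hfb hs).add (hlim_prim.const_mul (s + 1))
  rw [zero_add] at hsum
  refine hsum.congr' ?_
  filter_upwards [eventually_ge_atTop 1] with T hT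
  exact (integral_mul_cpow_eq_add_integral_primitive_mul_cpow hf hright hT).symm

end Primitive

end TailMellin

/-! ### Holomorphic functions on half-planes, balls and vertical lines -/

section HolomorphicFunctions

open Complex Set Filter Topology Metric

lemma isOpen_halfPlane_re_gt (a : ℝ) : IsOpen {s : ℂ | a < s.re} :=
  isOpen_lt continuous_const continuous_re

lemma eq_of_eq_on_halfPlane {f g : ℂ → ℂ} {a b : ℝ}
    (hf : DifferentiableOn ℂ f {s | a < s.re}) (hg : DifferentiableOn ℂ g {s | a < s.re})
    (heq : ∀ s : ℂ, b < s.re → f s = g s) {s : ℂ} (hs : a < s.re) : f s = g s := by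
  have hmem (c : ℝ) (hc : c ≤ max a b) : ((max a b + 1 : ℝ) : ℂ) ∈ {s : ℂ | c < s.re} := by
    rw [mem_ofPred_eq, ofReal_re]
    linarith
  refine (hf.analyticOnNhd (isOpen_halfPlane_re_gt a)).eqOn_of_preconnected_of_eventuallyEq
    (hg.analyticOnNhd (isOpen_halfPlane_re_gt a)) (convex_halfSpace_re_gt a).isPreconnected
    (hmem a (le_max_left a b)) ?_ hs
  filter_upwards [(isOpen_halfPlane_re_gt b).mem_nhds (hmem b (le_max_right a b))] with z hz
  exact heq z hz

-- Otherwise the order of vanishing of `f'` would be both smaller and at least that of `f`.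
lemma eventually_eq_zero_of_deriv_eq_mul {f h : ℂ → ℂ} {s : ℂ} (hf : AnalyticAt ℂ f s)
    (hh : AnalyticAt ℂ h s) (hderiv : deriv f =ᶠ[𝓝 s] h * f) (hs : f s = 0) :
    ∀ᶠ z in 𝓝 s, f z = 0 := by
  have hdrop : analyticOrderAt (deriv f) s + 1 = analyticOrderAt f s := by
    simpa [hs] using hf.analyticOrderAt_deriv_add_one
  have hle : analyticOrderAt f s ≤ analyticOrderAt (deriv f) s := by
    rw [analyticOrderAt_congr hderiv, analyticOrderAt_mul hh hf]
    exact le_add_self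
  rw [← analyticOrderAt_eq_top, ← hdrop]
  by_contra hfin
  have hne : analyticOrderAt (deriv f) s ≠ ⊤ := fun htop => hfin (by rw [htop, top_add])
  rw [← hdrop, ENat.add_one_le_iff hne] at hle
  exact lt_irrefl _ hle

variable {f g : ℂ → ℂ} {c s : ℂ} {B M R δ : ℝ}

lemma exists_hasDerivAt_logDeriv_and_eq_mul_exp (hf : DifferentiableOn ℂ f (ball c R))
    (hne : ∀ z ∈ ball c R, f z ≠ 0) :
    ∃ g : ℂ → ℂ, g c = 0 ∧ ∀ z ∈ ball c R,
      HasDerivAt g (logDeriv f z) z ∧ f z = f c * exp (g z) := by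
  have hlog : DifferentiableOn ℂ (logDeriv f) (ball c R) := (hf.deriv isOpen_ball).div hf hne
  obtain ⟨g, hgc, hg⟩ := hlog.isExactOn_ball.with_val_at c 0
  refine ⟨g, hgc, fun z hz => ⟨hg z hz, ?_⟩⟩
  have hconst : ∀ w ∈ ball c R, HasDerivAt (fun w => f w * exp (-g w)) 0 w := fun w hw => by
    refine ((hf.differentiableAt (isOpen_ball.mem_nhds hw)).hasDerivAt.mul
      (hg w hw).neg.cexp).congr_deriv ?_
    rw [logDeriv_apply]
    field_simp [hne w hw]
    ring
  have heq : f z * exp (-g z) = f c * exp (-g c) :=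
    isOpen_ball.is_const_of_deriv_eq_zero (convex_ball c R).isPreconnected
      (fun w hw => (hconst w hw).differentiableAt.differentiableWithinAt)
      (fun w hw => (hconst w hw).deriv) hz (mem_ball_self (pos_of_mem_ball hz))
  rw [hgc, neg_zero, exp_zero, mul_one] at heq
  rw [← heq, mul_assoc, ← exp_add, neg_add_cancel, exp_zero, mul_one]

lemma norm_le_of_re_le_on_ball (hM : 0 < M) (hg : DifferentiableOn ℂ g (ball c R))
    (hre : ∀ z ∈ ball c R, (g z).re ≤ M) (hgc : g c = 0) (hs : s ∈ ball c R) :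
    ‖g s‖ ≤ 2 * M * ‖s - c‖ / (R - ‖s - c‖) := by
  have hmaps : MapsTo (fun w => c + w) (ball 0 R) (ball c R) := fun w hw => by
    simpa [dist_eq] using hw
  have hbound := borelCaratheodory_zero (f := fun w => g (c + w)) (z := s - c) hM
    (hg.comp (by fun_prop) hmaps) (fun w hw => hre _ (hmaps hw)) (pos_of_mem_ball hs)
    (by simpa [dist_eq] using hs) (by simpa using hgc)
  simpa only [add_sub_cancel] using hbound

lemma norm_deriv_le_of_re_le_on_ball (hM : 0 < M) (hg : DifferentiableOn ℂ g (ball c R))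
    (hre : ∀ z ∈ ball c R, (g z).re ≤ M) (hgc : g c = 0) (hδ : 0 < δ) (hs : ‖s - c‖ ≤ R - δ) :
    ‖deriv g s‖ ≤ 8 * R / δ ^ 2 * M := by
  have hR : 0 ≤ R := by linarith [norm_nonneg (s - c)]
  have hsub : closedBall s (δ / 2) ⊆ ball c R :=
    closedBall_subset_ball' (by rw [dist_eq]; linarith)
  have hsphere : ∀ z ∈ sphere s (δ / 2), ‖g z‖ ≤ 2 * M * R / (δ / 2) := fun z hz => by
    have hzc : ‖z - c‖ ≤ R - δ / 2 := by
      rw [mem_sphere_iff_norm] at hz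
      linarith [norm_sub_le_norm_sub_add_norm_sub z s c]
    refine (norm_le_of_re_le_on_ball hM hg hre hgc
      (hsub (sphere_subset_closedBall hz))).trans ?_
    gcongr <;> linarith
  calc ‖deriv g s‖ ≤ 2 * M * R / (δ / 2) / (δ / 2) :=
        norm_deriv_le_of_forall_mem_sphere_norm_le (half_pos hδ)
          (hg.diffContOnCl_ball hsub) hsphere
    _ = 8 * R / δ ^ 2 * M := by field_simp; ring

lemma norm_logDeriv_le_of_norm_le_mul (hf : DifferentiableOn ℂ f (ball c R))
    (hne : ∀ z ∈ ball c R, f z ≠ 0) (hB : 1 < B) (hbound : ∀ z ∈ ball c R, ‖f z‖ ≤ B * ‖f c‖)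
    (hδ : 0 < δ) (hs : ‖s - c‖ ≤ R - δ) :
    ‖logDeriv f s‖ ≤ 8 * R / δ ^ 2 * Real.log B := by
  have hR : 0 < R := by linarith [norm_nonneg (s - c)]
  obtain ⟨g, hgc, hg⟩ := exists_hasDerivAt_logDeriv_and_eq_mul_exp hf hne
  have hre : ∀ z ∈ ball c R, (g z).re ≤ Real.log B := fun z hz => by
    rw [Real.le_log_iff_exp_le (by linarith), ← norm_exp]
    have hfc : 0 < ‖f c‖ := norm_pos_iff.2 (hne c (mem_ball_self hR))
    have hz' := hbound z hz
    rw [(hg z hz).2, norm_mul, mul_comm] at hz'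
    exact le_of_mul_le_mul_right hz' hfc
  have hsR : s ∈ ball c R := mem_ball_iff_norm.2 (by linarith)
  rw [← (hg s hsR).1.deriv]
  exact norm_deriv_le_of_re_le_on_ball (Real.log_pos hB)
    (fun z hz => (hg z hz).1.differentiableAt.differentiableWithinAt) hre hgc hδ hs

end HolomorphicFunctions

section VerticalLines

open Complex Set Filter Topology MeasureTheory

variable {G : ℂ → ℂ} {a b C r : ℝ}

lemma integrable_one_add_abs_rpow_neg (hr : 1 < r) :
    Integrable fun y : ℝ => (1 + |y|) ^ (-r) := by
  simpa using integrable_one_add_norm (E := ℝ) (μ := volume) (r := r) (by simpa using hr)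

lemma integrable_verticalLine (hr : 1 < r) (hcont : ∀ s : ℂ, s.re = a → ContinuousAt G s)
    (hG : ∀ s : ℂ, s.re = a → ‖G s‖ ≤ C * (1 + |s.im|) ^ (-r)) :
    Integrable fun y : ℝ => G (a + y * I) := by
  refine ((integrable_one_add_abs_rpow_neg hr).const_mul C).mono'
    (continuous_iff_continuousAt.2 fun y => ?_).aestronglyMeasurable (ae_of_all _ fun y => ?_)
  · exact ContinuousAt.comp (f := fun y : ℝ => (a + y * I : ℂ)) (hcont _ (by simp)) (by fun_prop)
  · simpa using hG (a + y * I) (by simp)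

lemma tendsto_integral_horizontalSegment (hr : 0 < r) (hab : a ≤ b)
    (hG : ∀ s : ℂ, a ≤ s.re → s.re ≤ b → ‖G s‖ ≤ C * (1 + |s.im|) ^ (-r)) {l : Filter ℝ}
    (hl : Tendsto (fun T : ℝ => |T|) l atTop) :
    Tendsto (fun T : ℝ => ∫ x in a..b, G (x + T * I)) l (𝓝 0) := by
  have hdecay : Tendsto (fun T : ℝ => C * (1 + |T|) ^ (-r) * |b - a|) l (𝓝 0) := by
    simpa using (((tendsto_rpow_neg_atTop hr).comp
      (tendsto_atTop_add_const_left _ 1 hl)).const_mul C).mul_const |b - a|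
  refine squeeze_zero_norm (fun T => ?_) hdecay
  refine intervalIntegral.norm_integral_le_of_norm_le_const fun x hx => ?_
  rw [uIoc_of_le hab] at hx
  simpa using hG (x + T * I) (by simpa using hx.1.le) (by simpa using hx.2)

lemma integral_verticalLine_eq (hr : 1 < r) (hab : a ≤ b)
    (hdiff : ∀ s : ℂ, a ≤ s.re → s.re ≤ b → DifferentiableAt ℂ G s)
    (hG : ∀ s : ℂ, a ≤ s.re → s.re ≤ b → ‖G s‖ ≤ C * (1 + |s.im|) ^ (-r)) :
    ∫ y : ℝ, G (a + y * I) = ∫ y : ℝ, G (b + y * I) := by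
  have hlim {c : ℝ} (hac : a ≤ c) (hcb : c ≤ b) : Tendsto
      (fun T : ℝ => ∫ y in (-T)..T, G (c + y * I)) atTop (𝓝 (∫ y : ℝ, G (c + y * I))) :=
    intervalIntegral_tendsto_integral
      (integrable_verticalLine hr (fun s hs => (hdiff s (hs ▸ hac) (hs ▸ hcb)).continuousAt)
        fun s hs => hG s (hs ▸ hac) (hs ▸ hcb)) tendsto_neg_atTop_atBot tendsto_id
  have htop := tendsto_integral_horizontalSegment (by linarith) hab hG tendsto_abs_atTop_atTop
  have hbot := (tendsto_integral_horizontalSegment (by linarith) hab hG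
    tendsto_abs_atBot_atTop).comp tendsto_neg_atTop_atBot
  have hrect (T : ℝ) : (∫ x in a..b, G (x + (-T : ℝ) * I)) - (∫ x in a..b, G (x + T * I)) +
      I • (∫ y in (-T)..T, G (b + y * I)) - I • (∫ y in (-T)..T, G (a + y * I)) = 0 := by
    refine integral_boundary_rect_eq_zero_of_differentiableOn G ⟨a, -T⟩ ⟨b, T⟩ fun s hs => ?_
    have hre : s.re ∈ Icc a b := by simpa only [mem_preimage, uIcc_of_le hab] using hs.1
    exact (hdiff s hre.1 hre.2).differentiableWithinAt
  have hsum := ((hbot.sub htop).add ((hlim hab le_rfl).const_smul I)).sub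
    ((hlim le_rfl hab).const_smul I)
  have hzero := tendsto_nhds_unique (hsum.congr hrect) tendsto_const_nhds
  rw [sub_zero, zero_add, ← smul_sub, smul_eq_mul] at hzero
  exact (sub_eq_zero.1 ((mul_eq_zero.1 hzero).resolve_left I_ne_zero)).symm

end VerticalLines

section CpowIncrement

open Complex Set

variable {x : ℝ} {s : ℂ}

lemma norm_cpow_add_one_sub_le_norm_mul (hx : 0 < x) (hs : 0 ≤ s.re) :
    ‖((x + 1 : ℝ) : ℂ) ^ (s + 1) - (x : ℂ) ^ (s + 1)‖ ≤ ‖s + 1‖ * (x + 1) ^ s.re := by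
  have hpos (t : ℝ) (ht : t ∈ Icc x (x + 1)) : 0 < t := hx.trans_le ht.1
  have hderiv : ∀ t ∈ Icc x (x + 1), HasDerivWithinAt (fun t : ℝ => (t : ℂ) ^ (s + 1))
      ((s + 1) * (t : ℂ) ^ s) (Icc x (x + 1)) t := fun t ht => by
    have hcpow := (hasDerivAt_id (t : ℂ)).cpow_const (c := s + 1)
      (Or.inl (by simpa using hpos t ht))
    refine (hcpow.comp_ofReal.congr_deriv ?_).hasDerivWithinAt
    rw [id, mul_one, add_sub_cancel_right]
  have hbound : ∀ t ∈ Icc x (x + 1), ‖(s + 1) * (t : ℂ) ^ s‖ ≤ ‖s + 1‖ * (x + 1) ^ s.re :=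
    fun t ht => by
      have ht0 := hpos t ht
      rw [norm_mul, norm_cpow_eq_rpow_re_of_pos ht0]
      gcongr
      exact ht.2
  simpa using (convex_Icc x (x + 1)).norm_image_sub_le_of_norm_hasDerivWithin_le hderiv hbound
    (left_mem_Icc.2 (by linarith)) (right_mem_Icc.2 (by linarith))

lemma norm_cpow_add_one_sub_le_two_mul (hx : 0 < x) (hs : 0 ≤ s.re) :
    ‖((x + 1 : ℝ) : ℂ) ^ (s + 1) - (x : ℂ) ^ (s + 1)‖ ≤ 2 * (x + 1) * (x + 1) ^ s.re := by
  calc ‖((x + 1 : ℝ) : ℂ) ^ (s + 1) - (x : ℂ) ^ (s + 1)‖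
      ≤ (x + 1) ^ (s.re + 1) + x ^ (s.re + 1) := by
        refine (norm_sub_le _ _).trans_eq ?_
        rw [norm_cpow_eq_rpow_re_of_pos hx, norm_cpow_eq_rpow_re_of_pos (by linarith), add_re,
          one_re]
    _ ≤ (x + 1) ^ (s.re + 1) + (x + 1) ^ (s.re + 1) := by gcongr; linarith
    _ = 2 * (x + 1) * (x + 1) ^ s.re := by rw [Real.rpow_add_one (by linarith)]; ring

lemma one_add_abs_im_le_three_mul_norm (hs : 1 / 2 ≤ s.re) : 1 + |s.im| ≤ 3 * ‖s‖ := by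
  linarith [re_le_norm s, abs_im_le_norm s]

lemma le_rpow_of_le_of_le_mul {A Y u κ : ℝ} (hA : 0 ≤ A) (hu : 0 < u) (hκ₀ : 0 ≤ κ) (hκ₁ : κ ≤ 1)
    (hYA : Y ≤ A) (hYu : Y ≤ A * u) : Y ≤ A * u ^ κ := by
  rcases le_total 1 u with h | h
  · exact hYA.trans (le_mul_of_one_le_right hA (Real.one_le_rpow h hκ₀))
  · have hle : u ≤ u ^ κ := by simpa using Real.rpow_le_rpow_of_exponent_ge hu h hκ₁
    exact hYu.trans (mul_le_mul_of_nonneg_left hle hA)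

lemma norm_cpow_add_one_sub_div_le {κ : ℝ} (hx : 1 ≤ x) (hs : 1 / 2 ≤ s.re) (hκ₀ : 0 ≤ κ)
    (hκ₁ : κ ≤ 1) :
    ‖(((x + 1 : ℝ) : ℂ) ^ (s + 1) - (x : ℂ) ^ (s + 1)) / (s + 1)‖ ≤
      (12 * x) ^ (s.re + κ) * (1 + |s.im|) ^ (-κ) := by
  have hx0 : 0 < x := by linarith
  have hre : 0 ≤ s.re := by linarith
  have him : 0 < 1 + |s.im| := by positivity
  have hnorm : 1 + |s.im| ≤ 3 * ‖s + 1‖ := by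
    simpa using one_add_abs_im_le_three_mul_norm (s := s + 1) (by rw [add_re, one_re]; linarith)
  have hnorm_pos : 0 < ‖s + 1‖ := by linarith
  calc ‖(((x + 1 : ℝ) : ℂ) ^ (s + 1) - (x : ℂ) ^ (s + 1)) / (s + 1)‖
      ≤ (x + 1) ^ s.re * (12 * x / (1 + |s.im|)) ^ κ := by
        rw [norm_div]
        refine le_rpow_of_le_of_le_mul (by positivity) (by positivity) hκ₀ hκ₁ ?_ ?_
        · rw [div_le_iff₀ hnorm_pos, mul_comm]
          exact norm_cpow_add_one_sub_le_norm_mul hx0 hre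
        · rw [div_le_iff₀ hnorm_pos]
          have hfactor : 2 * (x + 1) ≤ 12 * x / (1 + |s.im|) * ‖s + 1‖ := by
            rw [div_mul_eq_mul_div, le_div_iff₀ him]
            nlinarith
          calc _ ≤ 2 * (x + 1) * (x + 1) ^ s.re := norm_cpow_add_one_sub_le_two_mul hx0 hre
            _ ≤ 12 * x / (1 + |s.im|) * ‖s + 1‖ * (x + 1) ^ s.re := by gcongr
            _ = _ := by ring
    _ ≤ (12 * x) ^ s.re * (12 * x / (1 + |s.im|)) ^ κ := by gcongr; linarith
    _ = (12 * x) ^ (s.re + κ) * (1 + |s.im|) ^ (-κ) := by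
        rw [Real.div_rpow (by positivity) him.le, Real.rpow_add (by positivity),
          Real.rpow_neg him.le, div_eq_mul_inv, mul_assoc]

end CpowIncrement

/-! ### The Riemann zeta function -/

/-- `ζ` has no zeros in the open half-plane to the right of the line `re s = θ`. -/
def ZetaZeroFree (θ : ℝ) : Prop := ∀ s : ℂ, θ < s.re → riemannZeta s ≠ 0

/-- The error term `ψ(t) - t` of the prime number theorem, complex valued so that `tailMellin`
applies to it. -/
noncomputable def psiError (t : ℝ) : ℂ := ((Chebyshev.psi t - t : ℝ) : ℂ)

section Zeta

open Complex Set Filter Topology MeasureTheory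

variable {s : ℂ} {t θ : ℝ}

lemma measurable_natFloor_ofReal : Measurable fun t : ℝ => ((⌊t⌋₊ : ℕ) : ℂ) :=
  (measurable_from_nat (f := fun n : ℕ => (n : ℂ))).comp Nat.measurable_floor

lemma norm_ofReal_le_rpow_one (ht : 1 < t) : ‖(t : ℂ)‖ ≤ 1 * t ^ (1 : ℝ) := by
  rw [norm_real, Real.norm_of_nonneg (by linarith), one_mul, Real.rpow_one]

lemma norm_natFloor_le_rpow_one (ht : 1 < t) : ‖((⌊t⌋₊ : ℕ) : ℂ)‖ ≤ 1 * t ^ (1 : ℝ) := by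
  rw [norm_natCast, one_mul, Real.rpow_one]
  exact Nat.floor_le (by linarith)

lemma norm_natFloor_sub_self_le (ht : 1 < t) : ‖((⌊t⌋₊ : ℕ) : ℂ) - t‖ ≤ 1 * t ^ (0 : ℝ) := by
  have hle := Nat.floor_le (show 0 ≤ t by linarith)
  have hlt := Nat.lt_floor_add_one t
  rw [← ofReal_natCast, ← ofReal_sub, norm_real, Real.norm_eq_abs, Real.rpow_zero, abs_le]
  constructor <;> linarith

lemma ne_one_of_one_lt_re (hs : 1 < s.re) : s ≠ 1 := by
  rintro rfl
  exact lt_irrefl _ hs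

lemma riemannZeta₁_eq_sub_mul_riemannZeta (hs : s ≠ 1) :
    riemannZeta₁ s = (s - 1) * riemannZeta s := by
  rw [riemannZeta_eq_inv_sub_mul hs, mul_inv_cancel_left₀ (sub_ne_zero.2 hs)]

lemma riemannZeta_eq_mul_tailMellin_natFloor (hs : 1 < s.re) :
    riemannZeta s = s * tailMellin (fun t => ((⌊t⌋₊ : ℕ) : ℂ)) s := by
  have habel := LSeries_eq_mul_integral_of_nonneg (fun _ => (1 : ℝ)) (r := 1) zero_le_one hs
    (by simpa using Asymptotics.isBigO_refl _ _) (fun _ => zero_le_one)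
  rw [← LSeries_one_eq_riemannZeta hs, tailMellin]
  simpa [Pi.one_def] using habel

lemma riemannZeta₁_eq_add_mul_tailMellin (hs : 0 < s.re) :
    riemannZeta₁ s = s + s * (s - 1) * tailMellin (fun t => ((⌊t⌋₊ : ℕ) : ℂ) - t) s := by
  have hmeas := measurable_natFloor_ofReal.sub measurable_ofReal
  refine eq_of_eq_on_halfPlane (a := 0) (b := 1)
    (g := fun s => s + s * (s - 1) * tailMellin (fun t => ((⌊t⌋₊ : ℕ) : ℂ) - t) s)
    differentiable_riemannZeta₁.differentiableOn (fun s hs => ?_) (fun s hs => ?_) hs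
  · have hdiff := differentiableAt_tailMellin (fun _ => norm_natFloor_sub_self_le)
      hmeas.aestronglyMeasurable hs
    exact DifferentiableAt.differentiableWithinAt (by fun_prop)
  · have hs1 := ne_one_of_one_lt_re hs
    rw [riemannZeta₁_eq_sub_mul_riemannZeta hs1, riemannZeta_eq_mul_tailMellin_natFloor hs,
      tailMellin_sub (fun _ => norm_natFloor_le_rpow_one)
        measurable_natFloor_ofReal.aestronglyMeasurable (fun _ => norm_ofReal_le_rpow_one)
        measurable_ofReal.aestronglyMeasurable hs, tailMellin_id hs]
    field_simp [sub_ne_zero.2 hs1]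
    ring

lemma norm_riemannZeta₁_le (hs : 1 / 2 ≤ s.re) : ‖riemannZeta₁ s‖ ≤ 3 * (1 + ‖s‖) ^ 2 := by
  have htail : ‖tailMellin (fun t => ((⌊t⌋₊ : ℕ) : ℂ) - t) s‖ ≤ 2 := by
    refine (norm_tailMellin_le (fun _ => norm_natFloor_sub_self_le) (by linarith)).trans ?_
    rw [div_le_iff₀ (by linarith)]
    linarith
  have hsub : ‖s - 1‖ ≤ ‖s‖ + 1 := (norm_sub_le _ _).trans_eq (by rw [norm_one])
  rw [riemannZeta₁_eq_add_mul_tailMellin (by linarith)]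
  calc _ ≤ ‖s‖ + ‖s‖ * ‖s - 1‖ * ‖tailMellin (fun t => ((⌊t⌋₊ : ℕ) : ℂ) - t) s‖ :=
        (norm_add_le _ _).trans_eq (by rw [norm_mul, norm_mul])
    _ ≤ ‖s‖ + ‖s‖ * (‖s‖ + 1) * 2 := by gcongr
    _ ≤ 3 * (1 + ‖s‖) ^ 2 := by nlinarith [norm_nonneg s]

lemma exists_one_le_mul_norm_riemannZeta₁ :
    ∃ K : ℝ, 1 ≤ K ∧ ∀ s : ℂ, s.re = 2 → 1 ≤ K * ‖riemannZeta₁ s‖ := by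
  let moebius : ℕ → ℂ := fun n => (ArithmeticFunction.moebius n : ℂ)
  refine ⟨max 1 (∑' n, ‖LSeries.term moebius 2 n‖), le_max_left _ _, fun s hs => ?_⟩
  have hs1 : 1 < s.re := by rw [hs]; norm_num
  have hle : ‖LSeries moebius s‖ ≤ ∑' n, ‖LSeries.term moebius 2 n‖ := by
    refine (norm_tsum_le_tsum_norm
      (ArithmeticFunction.LSeriesSummable_moebius_iff.2 hs1).norm).trans_eq ?_
    congr 1 with n
    rw [LSeries.norm_term_eq, LSeries.norm_term_eq, hs, re_ofNat]
  have hinv : ‖riemannZeta s‖ * ‖LSeries moebius s‖ = 1 := by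
    rw [← norm_mul, ← LSeries_one_eq_riemannZeta hs1, LSeries_one_mul_Lseries_moebius hs1,
      norm_one]
  have hsub : 1 ≤ ‖s - 1‖ := by
    have hre := re_le_norm (s - 1)
    rw [sub_re, one_re, hs] at hre
    linarith
  rw [riemannZeta₁_eq_sub_mul_riemannZeta (ne_one_of_one_lt_re hs1), norm_mul]
  calc 1 = ‖LSeries moebius s‖ * (1 * ‖riemannZeta s‖) := by linarith
    _ ≤ max 1 (∑' n, ‖LSeries.term moebius 2 n‖) * (‖s - 1‖ * ‖riemannZeta s‖) := by
      gcongr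
      exact hle.trans (le_max_right _ _)

lemma riemannZeta₁_ne_zero (hθ : ZetaZeroFree θ) (hs : θ < s.re) : riemannZeta₁ s ≠ 0 := by
  by_cases hs1 : s = 1
  · rw [hs1, riemannZeta₁_one]
    exact one_ne_zero
  · rw [riemannZeta₁_eq_sub_mul_riemannZeta hs1]
    exact mul_ne_zero (sub_ne_zero.2 hs1) (hθ s hs)

lemma norm_logDeriv_riemannZeta₁_le_log (hθ : ZetaZeroFree θ) (hθ₀ : 1 / 2 ≤ θ) {K δ : ℝ}
    (hK : 1 ≤ K) (hlower : ∀ s : ℂ, s.re = 2 → 1 ≤ K * ‖riemannZeta₁ s‖) (hδ : 0 < δ)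
    (hs : θ + δ ≤ s.re) (hs₂ : s.re ≤ 2) :
    ‖logDeriv riemannZeta₁ s‖ ≤
      8 * (2 - θ) / δ ^ 2 * Real.log (75 * K * (1 + |s.im|) ^ 2) := by
  have hre (z : ℂ) (hz : z ∈ Metric.ball (⟨2, s.im⟩ : ℂ) (2 - θ)) : θ < z.re := by
    rw [Metric.mem_ball', dist_eq] at hz
    have hle := re_le_norm ((⟨2, s.im⟩ : ℂ) - z)
    rw [sub_re] at hle
    linarith
  have him : 1 ≤ (1 + |s.im|) ^ 2 := one_le_pow₀ (by linarith [abs_nonneg s.im])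
  refine norm_logDeriv_le_of_norm_le_mul (c := ⟨2, s.im⟩)
    differentiable_riemannZeta₁.differentiableOn (fun z hz => riemannZeta₁_ne_zero hθ (hre z hz))
    (by nlinarith) (fun z hz => ?_) hδ ?_
  · have hz_norm : ‖z‖ ≤ 7 / 2 + |s.im| := by
      have hcentre := norm_le_abs_re_add_abs_im (⟨2, s.im⟩ : ℂ)
      rw [abs_of_pos two_pos] at hcentre
      rw [mem_ball_iff_norm] at hz
      linarith [norm_le_norm_sub_add z ⟨2, s.im⟩]
    calc ‖riemannZeta₁ z‖ ≤ 3 * (1 + ‖z‖) ^ 2 := norm_riemannZeta₁_le (by linarith [hre z hz])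
      _ ≤ 3 * (5 * (1 + |s.im|)) ^ 2 := by gcongr; linarith [abs_nonneg s.im]
      _ = 75 * (1 + |s.im|) ^ 2 * 1 := by ring
      _ ≤ 75 * (1 + |s.im|) ^ 2 * (K * ‖riemannZeta₁ ⟨2, s.im⟩‖) := by
          gcongr
          exact hlower _ rfl
      _ = 75 * K * (1 + |s.im|) ^ 2 * ‖riemannZeta₁ ⟨2, s.im⟩‖ := by ring
  · have hsub : s - ⟨2, s.im⟩ = ((s.re - 2 : ℝ) : ℂ) := Complex.ext (by simp) (by simp)
    rw [hsub, norm_real, Real.norm_eq_abs, abs_of_nonpos (by linarith)]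
    linarith

lemma exists_norm_logDeriv_riemannZeta₁_le (hθ : ZetaZeroFree θ) (hθ₀ : 1 / 2 ≤ θ) (hθ₁ : θ ≤ 2)
    {δ η : ℝ} (hδ : 0 < δ) (hη : 0 < η) :
    ∃ C : ℝ, 0 ≤ C ∧ ∀ s : ℂ, θ + δ ≤ s.re → s.re ≤ 2 →
      ‖logDeriv riemannZeta₁ s‖ ≤ C * (1 + |s.im|) ^ η := by
  obtain ⟨K, hK, hlower⟩ := exists_one_le_mul_norm_riemannZeta₁
  have hlogK : 0 ≤ Real.log (75 * K) := Real.log_nonneg (by linarith)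
  refine ⟨8 * (2 - θ) / δ ^ 2 * (Real.log (75 * K) + 2 / η), by positivity, fun s hs hs₂ => ?_⟩
  have him : 1 ≤ 1 + |s.im| := by linarith [abs_nonneg s.im]
  have hlog : Real.log (75 * K * (1 + |s.im|) ^ 2) ≤
      (Real.log (75 * K) + 2 / η) * (1 + |s.im|) ^ η := by
    calc Real.log (75 * K * (1 + |s.im|) ^ 2)
        = Real.log (75 * K) * 1 + 2 * Real.log (1 + |s.im|) := by
          rw [Real.log_mul (by positivity) (by positivity), Real.log_pow, Nat.cast_two, mul_one]
      _ ≤ Real.log (75 * K) * (1 + |s.im|) ^ η + 2 * ((1 + |s.im|) ^ η / η) := by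
          gcongr
          · exact Real.one_le_rpow him hη.le
          · exact Real.log_le_rpow_div (by positivity) hη
      _ = (Real.log (75 * K) + 2 / η) * (1 + |s.im|) ^ η := by ring
  calc ‖logDeriv riemannZeta₁ s‖
      ≤ 8 * (2 - θ) / δ ^ 2 * Real.log (75 * K * (1 + |s.im|) ^ 2) :=
        norm_logDeriv_riemannZeta₁_le_log hθ hθ₀ hK hlower hδ hs hs₂
    _ ≤ 8 * (2 - θ) / δ ^ 2 * ((Real.log (75 * K) + 2 / η) * (1 + |s.im|) ^ η) := by gcongr
    _ = 8 * (2 - θ) / δ ^ 2 * (Real.log (75 * K) + 2 / η) * (1 + |s.im|) ^ η := by ring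

lemma measurable_psiError : Measurable psiError :=
  measurable_ofReal.comp (Chebyshev.psi_mono.measurable.sub measurable_id)

lemma norm_psi_le (ht : 1 < t) :
    ‖((Chebyshev.psi t : ℝ) : ℂ)‖ ≤ (Real.log 4 + 4) * t ^ (1 : ℝ) := by
  rw [norm_real, Real.norm_of_nonneg (Chebyshev.psi_nonneg t), Real.rpow_one]
  exact Chebyshev.psi_le_const_mul_self (by linarith)

lemma norm_psiError_le (ht : 1 < t) : ‖psiError t‖ ≤ (Real.log 4 + 5) * t ^ (1 : ℝ) := by
  rw [psiError, ofReal_sub]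
  linarith [norm_sub_le ((Chebyshev.psi t : ℝ) : ℂ) t, norm_psi_le ht, norm_ofReal_le_rpow_one ht]

lemma LSeries_vonMangoldt_eq_mul_tailMellin_psi (hs : 1 < s.re) :
    LSeries (fun n => (ArithmeticFunction.vonMangoldt n : ℂ)) s =
      s * tailMellin (fun t => ((Chebyshev.psi t : ℝ) : ℂ)) s := by
  have hpsi (n : ℕ) :
      ∑ k ∈ Finset.Icc 1 n, ArithmeticFunction.vonMangoldt k = Chebyshev.psi n := by
    rw [Chebyshev.psi, Nat.floor_natCast]
    rfl
  rw [LSeries_eq_mul_integral_of_nonneg (fun n => ArithmeticFunction.vonMangoldt n) zero_le_one hs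
    (Asymptotics.IsBigO.of_bound (Real.log 4 + 4) (Eventually.of_forall fun n => ?_))
    fun n => ArithmeticFunction.vonMangoldt_nonneg, tailMellin]
  · simp_rw [← ofReal_sum, hpsi, ← Chebyshev.psi_eq_psi_coe_floor]
  · rw [hpsi, Real.rpow_one, Real.norm_of_nonneg (Chebyshev.psi_nonneg _), Real.norm_natCast]
    exact Chebyshev.psi_le_const_mul_self (Nat.cast_nonneg n)

lemma mul_tailMellin_psiError (hs : 1 < s.re) :
    s * tailMellin psiError s = -(logDeriv riemannZeta₁ s + 1) := by
  have hs1 : s - 1 ≠ 0 := sub_ne_zero.2 (ne_one_of_one_lt_re hs)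
  have hne : riemannZeta₁ s ≠ 0 :=
    riemannZeta₁_ne_zero (fun _ => riemannZeta_ne_zero_of_one_lt_re) hs
  have hsub : tailMellin psiError s =
      tailMellin (fun t => ((Chebyshev.psi t : ℝ) : ℂ)) s - 1 / (s - 1) := by
    rw [← tailMellin_id hs, ← tailMellin_sub (fun _ => norm_psi_le)
      (measurable_ofReal.comp Chebyshev.psi_mono.measurable).aestronglyMeasurable
      (fun _ => norm_ofReal_le_rpow_one) measurable_ofReal.aestronglyMeasurable hs]
    simp_rw [← ofReal_sub]
    rfl
  have hlog : s * tailMellin (fun t => ((Chebyshev.psi t : ℝ) : ℂ)) s =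
      -deriv riemannZeta s / riemannZeta s := by
    rw [← LSeries_vonMangoldt_eq_mul_tailMellin_psi hs]
    exact ArithmeticFunction.LSeries_vonMangoldt_eq_deriv_riemannZeta_div hs
  rw [hsub, mul_sub, hlog, deriv_riemannZeta_eq_neg_inv_sub_sq_mul_add (sub_ne_zero.1 hs1),
    riemannZeta_eq_inv_sub_mul (sub_ne_zero.1 hs1), logDeriv_apply]
  field_simp
  ring

lemma exists_norm_psiError_le_of_growthOrderLE (hθ₀ : 0 ≤ θ)
    (h : GrowthOrderLE θ fun x => Chebyshev.psi x - x) {ε : ℝ} (hε : 0 < ε) :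
    ∃ C : ℝ, ∀ t, 1 < t → ‖psiError t‖ ≤ C * t ^ (θ + ε) := by
  obtain ⟨C, hC, hbound⟩ := h.exists_pos_bound hε
  refine ⟨C + 2, fun t ht => ?_⟩
  have hpow : 1 ≤ t ^ (θ + ε) := Real.one_le_rpow ht.le (by linarith)
  rw [psiError, norm_real, Real.norm_eq_abs]
  rcases le_or_gt 2 t with ht2 | ht2
  · exact (hbound t ht2).trans (by gcongr; linarith)
  · rw [Chebyshev.psi_eq_zero_of_lt_two ht2, zero_sub, abs_neg, abs_of_pos (by linarith)]
    nlinarith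

lemma differentiableAt_tailMellin_psiError (hθ₀ : 0 ≤ θ)
    (h : GrowthOrderLE θ fun x => Chebyshev.psi x - x) (hs : θ < s.re) :
    DifferentiableAt ℂ (tailMellin psiError) s := by
  obtain ⟨C, hC⟩ := exists_norm_psiError_le_of_growthOrderLE hθ₀ h
    (show 0 < (s.re - θ) / 2 by linarith)
  exact differentiableAt_tailMellin hC measurable_psiError.aestronglyMeasurable (by linarith)

lemma deriv_riemannZeta₁_eq_mul (hθ₀ : 0 ≤ θ) (h : GrowthOrderLE θ fun x => Chebyshev.psi x - x)
    (hs : θ < s.re) :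
    deriv riemannZeta₁ s = -(s * tailMellin psiError s + 1) * riemannZeta₁ s := by
  refine eq_of_eq_on_halfPlane (b := 1)
    (g := fun s => -(s * tailMellin psiError s + 1) * riemannZeta₁ s)
    (differentiable_riemannZeta₁.differentiableOn.deriv (isOpen_halfPlane_re_gt θ))
    (fun s hs => ?_) (fun s hs => ?_) hs
  · have hdiff := differentiableAt_tailMellin_psiError hθ₀ h hs
    have hzeta := differentiable_riemannZeta₁ s
    exact DifferentiableAt.differentiableWithinAt (by fun_prop)
  · have hne : riemannZeta₁ s ≠ 0 :=
      riemannZeta₁_ne_zero (fun _ => riemannZeta_ne_zero_of_one_lt_re) hs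
    rw [mul_tailMellin_psiError hs, logDeriv_apply]
    field_simp
    ring

lemma zetaZeroFree_of_growthOrderLE_psi_sub_self (hθ₀ : 0 ≤ θ)
    (h : GrowthOrderLE θ fun x => Chebyshev.psi x - x) : ZetaZeroFree θ := by
  intro s hs hzero
  have hs1 : s ≠ 1 := fun hs1 => riemannZeta_one_ne_zero (hs1 ▸ hzero)
  have hnhds := (isOpen_halfPlane_re_gt θ).mem_nhds hs
  have hcoeff : AnalyticAt ℂ (fun z => -(z * tailMellin psiError z + 1)) s := by
    refine DifferentiableOn.analyticAt (fun z hz => ?_) hnhds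
    have hdiff := differentiableAt_tailMellin_psiError hθ₀ h hz
    exact DifferentiableAt.differentiableWithinAt (by fun_prop)
  have hlocal : ∀ᶠ z in 𝓝 s, riemannZeta₁ z = 0 := by
    refine eventually_eq_zero_of_deriv_eq_mul (differentiable_riemannZeta₁.analyticAt s) hcoeff ?_
      (by rw [riemannZeta₁_eq_sub_mul_riemannZeta hs1, hzero, mul_zero])
    filter_upwards [hnhds] with z hz
    exact deriv_riemannZeta₁_eq_mul hθ₀ h hz
  have hglobal := (differentiable_riemannZeta₁.differentiableOn.analyticOnNhd isOpen_univ
    ).eqOn_zero_of_preconnected_of_eventuallyEq_zero isPreconnected_univ (mem_univ s) hlocal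
      (mem_univ 1)
  exact one_ne_zero (riemannZeta₁_one.symm.trans hglobal)

lemma riemannZeta_one_sub_eq_zero (hzero : riemannZeta s = 0)
    (htrivial : ¬∃ n : ℕ, s = -2 * (n + 1)) (hs1 : s ≠ 1) :
    riemannZeta (1 - s) = 0 := by
  have hs0 : s ≠ 0 := by
    rintro rfl
    rw [riemannZeta_zero] at hzero
    norm_num at hzero
  have hGamma : Gammaℝ s ≠ 0 := by
    rw [Ne, Gammaℝ_eq_zero_iff]
    rintro ⟨n | n, hn⟩
    · exact hs0 (by simpa using hn)
    · exact htrivial ⟨n, by rw [hn]; push_cast; ring⟩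
  have hcompleted : completedRiemannZeta s = 0 := by
    rw [riemannZeta_def_of_ne_zero hs0, div_eq_zero_iff] at hzero
    exact hzero.resolve_right hGamma
  rw [riemannZeta_def_of_ne_zero (sub_ne_zero.2 hs1.symm), completedRiemannZeta_one_sub,
    hcompleted, zero_div]

lemma riemannHypothesis_iff_zetaZeroFree : RiemannHypothesis ↔ ZetaZeroFree (1 / 2) := by
  constructor
  · intro hRH s hs hzero
    have hs1 : s ≠ 1 := fun hs1 => riemannZeta_one_ne_zero (hs1 ▸ hzero)
    refine hs.ne' (hRH s hzero ?_ hs1)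
    rintro ⟨n, rfl⟩
    have hre : (-2 * ((n : ℂ) + 1)).re = -2 * (n + 1) := by simp
    linarith [(Nat.cast_nonneg n : (0 : ℝ) ≤ n)]
  · intro hfree s hzero htrivial hs1
    have hreflect := riemannZeta_one_sub_eq_zero hzero htrivial hs1
    rcases lt_trichotomy s.re (1 / 2) with hlt | heq | hgt
    · exact absurd hreflect (hfree _ (by rw [sub_re, one_re]; linarith))
    · exact heq
    · exact absurd hzero (hfree s hgt)

end Zeta

/-! ### From a zero-free half-plane to the size of `ψ(x) - x` -/

/-- The primitive of `psiError` vanishing at `1`. Its Mellin transform, unlike that of `psiError`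
itself, decays fast enough on vertical lines for the inversion integral to converge absolutely. -/
noncomputable def psiErrorPrimitive (x : ℝ) : ℂ := ∫ t in (1 : ℝ)..x, psiError t

/-- The function whose value at `s`, for `1 < re s`, is the Mellin transform of `psiErrorPrimitive`
at `s + 1`; it is holomorphic as far to the left as `riemannZeta₁` has no zeros. -/
noncomputable def psiErrorKernel (s : ℂ) : ℂ := -((logDeriv riemannZeta₁ s + 1) / s / (s + 1))

section PsiError

open Complex Set Filter Topology MeasureTheory

variable {s : ℂ} {x θ δ η : ℝ}

lemma locallyIntegrable_psiError : LocallyIntegrable psiError := fun t =>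
  ofRealCLM.integrableAtFilter_comp
    ((Chebyshev.psi_mono.locallyIntegrable.sub continuous_id.locallyIntegrable) t)

lemma intervalIntegrable_psiError (a b : ℝ) : IntervalIntegrable psiError volume a b :=
  (locallyIntegrable_psiError.integrableOn_isCompact isCompact_uIcc).intervalIntegrable

lemma psi_eq_of_mem_Ico {n : ℕ} {t : ℝ} (ht : t ∈ Ico (n : ℝ) (n + 1)) :
    Chebyshev.psi t = Chebyshev.psi n := by
  rw [Chebyshev.psi_eq_psi_coe_floor,
    (Nat.floor_eq_iff ((Nat.cast_nonneg n).trans ht.1)).2 ⟨ht.1, ht.2⟩]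

lemma continuousWithinAt_psiError {t : ℝ} (ht : 0 ≤ t) : ContinuousWithinAt psiError (Ioi t) t := by
  have hfloor : t ∈ Ico (⌊t⌋₊ : ℝ) (⌊t⌋₊ + 1) := ⟨Nat.floor_le ht, Nat.lt_floor_add_one t⟩
  have hconst : ContinuousWithinAt Chebyshev.psi (Ioi t) t := by
    refine (continuousWithinAt_const (b := Chebyshev.psi ⌊t⌋₊)).congr_of_eventuallyEq ?_
      (psi_eq_of_mem_Ico hfloor)
    filter_upwards [Ioo_mem_nhdsGT hfloor.2] with u hu
    exact psi_eq_of_mem_Ico ⟨hfloor.1.trans hu.1.le, hu.2⟩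
  exact continuous_ofReal.continuousAt.comp_continuousWithinAt (hconst.sub continuousWithinAt_id)

lemma continuous_psiErrorPrimitive : Continuous psiErrorPrimitive :=
  intervalIntegral.continuous_primitive intervalIntegrable_psiError 1

lemma psiErrorPrimitive_succ_sub (n : ℕ) :
    psiErrorPrimitive (n + 1) - psiErrorPrimitive n =
      ((Chebyshev.psi n - n - 1 / 2 : ℝ) : ℂ) := by
  have hcongr : ∫ t in (n : ℝ)..(n + 1), psiError t =
      ∫ t in (n : ℝ)..(n + 1), ((Chebyshev.psi n - t : ℝ) : ℂ) := by
    have hle : (n : ℝ) ≤ n + 1 := by linarith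
    rw [intervalIntegral.integral_of_le hle, intervalIntegral.integral_of_le hle,
      ← integral_Ico_eq_integral_Ioc, ← integral_Ico_eq_integral_Ioc]
    refine setIntegral_congr_fun measurableSet_Ico fun t ht => ?_
    rw [psiError, psi_eq_of_mem_Ico ht]
  rw [psiErrorPrimitive, psiErrorPrimitive, intervalIntegral.integral_interval_sub_left
    (intervalIntegrable_psiError _ _) (intervalIntegrable_psiError _ _), hcongr,
    intervalIntegral.integral_ofReal, intervalIntegral.integral_sub
    intervalIntegrable_const intervalIntegral.intervalIntegrable_id, integral_id,
    intervalIntegral.integral_const, smul_eq_mul]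
  congr 1
  ring

lemma ne_zero_of_half_le_re (hs : 1 / 2 ≤ s.re) : s ≠ 0 := by
  rintro rfl
  norm_num at hs

lemma tailMellin_psiErrorPrimitive (hs : 1 < s.re) :
    tailMellin psiErrorPrimitive (s + 1) = psiErrorKernel s := by
  have hs0 : s ≠ 0 := ne_zero_of_half_le_re (by linarith)
  have hs1 : s + 1 ≠ 0 := ne_zero_of_half_le_re (by rw [add_re, one_re]; linarith)
  have hprim : tailMellin psiError s = (s + 1) * tailMellin psiErrorPrimitive (s + 1) :=
    tailMellin_eq_mul_tailMellin_primitive zero_le_one (fun _ => norm_psiError_le)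
      locallyIntegrable_psiError (fun t ht => continuousWithinAt_psiError (by linarith)) hs
  have hlog := mul_tailMellin_psiError hs
  rw [hprim] at hlog
  rw [psiErrorKernel, ← neg_div, ← neg_div, ← hlog]
  field_simp

lemma norm_div_le_of_norm_le_rpow {w : ℂ} {C r : ℝ} (hs : 1 / 2 ≤ s.re)
    (hw : ‖w‖ ≤ C * (1 + |s.im|) ^ r) : ‖w / s‖ ≤ 3 * C * (1 + |s.im|) ^ (r - 1) := by
  have him : 0 < 1 + |s.im| := by positivity
  have hnonneg : 0 ≤ C * (1 + |s.im|) ^ r := (norm_nonneg w).trans hw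
  have hnorm : 1 + |s.im| ≤ 3 * ‖s‖ := one_add_abs_im_le_three_mul_norm hs
  have hdiv : ‖s‖⁻¹ ≤ 3 / (1 + |s.im|) := by
    rw [inv_le_comm₀ (by linarith) (by positivity), inv_div]
    linarith
  calc ‖w / s‖ = ‖w‖ * ‖s‖⁻¹ := by rw [norm_div, div_eq_mul_inv]
    _ ≤ C * (1 + |s.im|) ^ r * (3 / (1 + |s.im|)) := by gcongr
    _ = 3 * C * (1 + |s.im|) ^ (r - 1) := by rw [Real.rpow_sub_one him.ne']; ring

lemma norm_cpow_add_one_sub_mul_psiErrorKernel_le {C κ : ℝ} (hx : 1 ≤ x) (hs : 1 / 2 ≤ s.re)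
    (hκ₀ : 0 ≤ κ) (hκ₁ : κ ≤ 1)
    (hlog : ‖(logDeriv riemannZeta₁ s + 1) / s‖ ≤ C * (1 + |s.im|) ^ (η - 1)) :
    ‖(((x + 1 : ℝ) : ℂ) ^ (s + 1) - (x : ℂ) ^ (s + 1)) * psiErrorKernel s‖ ≤
      (12 * x) ^ (s.re + κ) * C * (1 + |s.im|) ^ (-(1 + κ - η)) := by
  have him : 0 < 1 + |s.im| := by positivity
  calc ‖(((x + 1 : ℝ) : ℂ) ^ (s + 1) - (x : ℂ) ^ (s + 1)) * psiErrorKernel s‖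
      = ‖(((x + 1 : ℝ) : ℂ) ^ (s + 1) - (x : ℂ) ^ (s + 1)) / (s + 1)‖ *
          ‖(logDeriv riemannZeta₁ s + 1) / s‖ := by
        rw [psiErrorKernel, mul_neg, norm_neg, ← norm_mul]
        congr 1
        ring
    _ ≤ (12 * x) ^ (s.re + κ) * (1 + |s.im|) ^ (-κ) * (C * (1 + |s.im|) ^ (η - 1)) := by
        gcongr
        exact norm_cpow_add_one_sub_div_le hx hs hκ₀ hκ₁
    _ = (12 * x) ^ (s.re + κ) * C * (1 + |s.im|) ^ (-(1 + κ - η)) := by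
        rw [show -(1 + κ - η) = -κ + (η - 1) by ring, Real.rpow_add him]
        ring

section ZeroFree

variable (hθ : ZetaZeroFree θ) (hθ₀ : 1 / 2 ≤ θ)
include hθ hθ₀

lemma exists_norm_logDeriv_add_one_div_le (hθ₁ : θ ≤ 1) (hδ : 0 < δ) (hη : 0 < η) :
    ∃ C : ℝ, 0 ≤ C ∧ ∀ s : ℂ, θ + δ ≤ s.re → s.re ≤ 2 →
      ‖(logDeriv riemannZeta₁ s + 1) / s‖ ≤ C * (1 + |s.im|) ^ (η - 1) := by
  obtain ⟨C, hC, hbound⟩ := exists_norm_logDeriv_riemannZeta₁_le hθ hθ₀ (by linarith) hδ hη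
  refine ⟨3 * (C + 1), by positivity, fun s hs hs₂ => ?_⟩
  refine norm_div_le_of_norm_le_rpow (by linarith) ?_
  have hone : 1 ≤ (1 + |s.im|) ^ η := Real.one_le_rpow (by linarith [abs_nonneg s.im]) hη.le
  calc ‖logDeriv riemannZeta₁ s + 1‖ ≤ ‖logDeriv riemannZeta₁ s‖ + 1 :=
        (norm_add_le _ _).trans_eq (by rw [norm_one])
    _ ≤ (C + 1) * (1 + |s.im|) ^ η := by linarith [hbound s hs hs₂]

lemma exists_norm_psiErrorKernel_le (hθ₁ : θ ≤ 1) (hδ : 0 < δ) :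
    ∃ C : ℝ, ∀ s : ℂ, θ + δ ≤ s.re → s.re ≤ 2 →
      ‖psiErrorKernel s‖ ≤ C * (1 + |s.im|) ^ (-(3 / 2 : ℝ)) := by
  obtain ⟨C, -, hbound⟩ :=
    exists_norm_logDeriv_add_one_div_le hθ hθ₀ hθ₁ hδ (show (0 : ℝ) < 1 / 2 by norm_num)
  refine ⟨3 * C, fun s hs hs₂ => ?_⟩
  have him : (s + 1).im = s.im := by rw [add_im, one_im, add_zero]
  have hdiv := norm_div_le_of_norm_le_rpow (s := s + 1) (by rw [add_re, one_re]; linarith)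
    (him ▸ hbound s hs hs₂)
  rw [him, show (1 / 2 - 1 - 1 : ℝ) = -(3 / 2) by norm_num] at hdiv
  rwa [psiErrorKernel, norm_neg]

lemma differentiableAt_psiErrorKernel (hs : θ < s.re) :
    DifferentiableAt ℂ psiErrorKernel s := by
  have hs0 : s ≠ 0 := ne_zero_of_half_le_re (by linarith)
  have hs1 : s + 1 ≠ 0 := ne_zero_of_half_le_re (by rw [add_re, one_re]; linarith)
  have hlog : DifferentiableAt ℂ (logDeriv riemannZeta₁) s :=
    (differentiable_riemannZeta₁.analyticAt s).deriv.differentiableAt.div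
      (differentiable_riemannZeta₁ s) (riemannZeta₁_ne_zero hθ hs)
  exact (((hlog.add_const 1).div differentiableAt_id hs0).div (by fun_prop) hs1).neg

lemma differentiableAt_cpow_mul_psiErrorKernel (hx : 0 < x) (hs : θ < s.re) :
    DifferentiableAt ℂ (fun s => (x : ℂ) ^ (s + 1) * psiErrorKernel s) s :=
  (DifferentiableAt.const_cpow (by fun_prop) (Or.inl (ofReal_ne_zero.2 hx.ne'))).mul
    (differentiableAt_psiErrorKernel hθ hθ₀ hs)

lemma exists_norm_cpow_mul_psiErrorKernel_le (hθ₁ : θ ≤ 1) (hδ : 0 < δ) (hx : 1 ≤ x) :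
    ∃ C : ℝ, ∀ s : ℂ, θ + δ ≤ s.re → s.re ≤ 2 →
      ‖(x : ℂ) ^ (s + 1) * psiErrorKernel s‖ ≤ C * (1 + |s.im|) ^ (-(3 / 2 : ℝ)) := by
  obtain ⟨C, hbound⟩ := exists_norm_psiErrorKernel_le hθ hθ₀ hθ₁ hδ
  refine ⟨x ^ (3 : ℝ) * C, fun s hs hs₂ => ?_⟩
  rw [norm_mul, norm_cpow_eq_rpow_re_of_pos (by linarith), mul_assoc]
  gcongr
  · rw [add_re, one_re]
    linarith
  · exact hbound s hs hs₂

lemma integrable_cpow_mul_psiErrorKernel (hθ₁ : θ ≤ 1) {σ : ℝ} (hσ : θ < σ) (hσ₂ : σ ≤ 2)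
    (hx : 1 ≤ x) :
    Integrable fun y : ℝ => (x : ℂ) ^ ((σ : ℂ) + y * I + 1) * psiErrorKernel (σ + y * I) := by
  obtain ⟨C, hbound⟩ :=
    exists_norm_cpow_mul_psiErrorKernel_le hθ hθ₀ hθ₁ (sub_pos.2 hσ) hx
  exact integrable_verticalLine (G := fun s => (x : ℂ) ^ (s + 1) * psiErrorKernel s)
    (show (1 : ℝ) < 3 / 2 by norm_num)
    (fun s hs => (differentiableAt_cpow_mul_psiErrorKernel hθ hθ₀ (by linarith)
      (by linarith)).continuousAt)
    fun s hs => hbound s (by linarith) (by linarith)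

omit hθ hθ₀ in
lemma psiErrorPrimitive_eq_integral_two (hx : 1 < x) :
    psiErrorPrimitive x = (1 / (2 * Real.pi)) •
      ∫ y : ℝ, (x : ℂ) ^ (((2 : ℝ) : ℂ) + y * I + 1) * psiErrorKernel ((2 : ℝ) + y * I) := by
  have hthree (y : ℝ) : (((3 : ℝ) : ℂ) + y * I) = ((2 : ℝ) : ℂ) + y * I + 1 := by
    push_cast
    ring
  have hkernel (y : ℝ) : tailMellin psiErrorPrimitive ((3 : ℝ) + y * I) =
      psiErrorKernel ((2 : ℝ) + y * I) := by
    rw [hthree, tailMellin_psiErrorPrimitive (by simp)]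
  have hinteg : Integrable fun y : ℝ => psiErrorKernel ((2 : ℝ) + y * I) := by
    simpa using integrable_cpow_mul_psiErrorKernel (θ := 1)
      (fun _ => riemannZeta_ne_zero_of_one_lt_re) (by norm_num) le_rfl one_lt_two le_rfl le_rfl
  have hinv := eq_integral_tailMellin (f := psiErrorPrimitive) (c := 3)
    (fun _ => norm_primitive_le zero_le_one fun _ => norm_psiError_le)
    continuous_psiErrorPrimitive.aestronglyMeasurable (by norm_num)
    (by simpa only [hkernel] using hinteg) hx continuous_psiErrorPrimitive.continuousAt
  simpa only [hkernel, ← hthree] using hinv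

lemma psiErrorPrimitive_eq_integral (hθ₁ : θ ≤ 1) {σ : ℝ} (hσ : θ < σ) (hσ₂ : σ ≤ 2)
    (hx : 1 < x) :
    psiErrorPrimitive x = (1 / (2 * Real.pi)) •
      ∫ y : ℝ, (x : ℂ) ^ ((σ : ℂ) + y * I + 1) * psiErrorKernel (σ + y * I) := by
  obtain ⟨C, hbound⟩ :=
    exists_norm_cpow_mul_psiErrorKernel_le hθ hθ₀ hθ₁ (sub_pos.2 hσ) hx.le
  rw [psiErrorPrimitive_eq_integral_two hx,
    integral_verticalLine_eq (G := fun s => (x : ℂ) ^ (s + 1) * psiErrorKernel s)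
      (show (1 : ℝ) < 3 / 2 by norm_num) hσ₂
      (fun s hs _ => differentiableAt_cpow_mul_psiErrorKernel hθ hθ₀ (by linarith) (by linarith))
      fun s hs => hbound s (by linarith)]

lemma psi_sub_eq_integral (hθ₁ : θ ≤ 1) {σ : ℝ} (hσ : θ < σ) (hσ₂ : σ ≤ 2) {n : ℕ}
    (hn : 2 ≤ n) :
    ((Chebyshev.psi n - n - 1 / 2 : ℝ) : ℂ) = (1 / (2 * Real.pi)) •
      ∫ y : ℝ, ((((n + 1 : ℝ) : ℂ) ^ ((σ : ℂ) + y * I + 1) -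
        ((n : ℝ) : ℂ) ^ ((σ : ℂ) + y * I + 1)) * psiErrorKernel (σ + y * I)) := by
  have hn₂ : (2 : ℝ) ≤ n := by exact_mod_cast hn
  simp_rw [sub_mul]
  rw [integral_sub (integrable_cpow_mul_psiErrorKernel hθ hθ₀ hθ₁ hσ hσ₂ (by linarith))
      (integrable_cpow_mul_psiErrorKernel hθ hθ₀ hθ₁ hσ hσ₂ (by linarith)), smul_sub,
    ← psiErrorPrimitive_eq_integral hθ hθ₀ hθ₁ hσ hσ₂ (by linarith),
    ← psiErrorPrimitive_eq_integral hθ hθ₀ hθ₁ hσ hσ₂ (by linarith), psiErrorPrimitive_succ_sub]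

lemma exists_abs_psi_natCast_sub_le (hθ₁ : θ ≤ 1) {ε : ℝ} (hε : 0 < ε) (hε₁ : ε ≤ 1) :
    ∃ C : ℝ, 0 ≤ C ∧ ∀ n : ℕ, 2 ≤ n →
      |Chebyshev.psi n - n - 1 / 2| ≤ C * (n : ℝ) ^ (θ + ε) := by
  obtain ⟨C, hC, hlog⟩ := exists_norm_logDeriv_add_one_div_le hθ hθ₀ hθ₁ (half_pos hε)
    (show 0 < ε / 4 by linarith)
  have hr : 1 < 1 + ε / 2 - ε / 4 := by linarith
  set J := ∫ y : ℝ, (1 + |y|) ^ (-(1 + ε / 2 - ε / 4))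
  have hpi : 0 < 1 / (2 * Real.pi) := by positivity
  refine ⟨1 / (2 * Real.pi) * (12 ^ (θ + ε) * C * J), by positivity, fun n hn => ?_⟩
  have hn₁ : (1 : ℝ) ≤ n := by exact_mod_cast one_le_two.trans hn
  have hintegrand (y : ℝ) : ‖(((n + 1 : ℝ) : ℂ) ^ (((θ + ε / 2 : ℝ) : ℂ) + y * I + 1) -
      ((n : ℝ) : ℂ) ^ (((θ + ε / 2 : ℝ) : ℂ) + y * I + 1)) *
        psiErrorKernel ((θ + ε / 2 : ℝ) + y * I)‖ ≤
      (12 * n) ^ (θ + ε) * C * (1 + |y|) ^ (-(1 + ε / 2 - ε / 4)) := by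
    have hre : (((θ + ε / 2 : ℝ) : ℂ) + y * I).re = θ + ε / 2 := by simp
    have hle := norm_cpow_add_one_sub_mul_psiErrorKernel_le hn₁ (by rw [hre]; linarith)
      (half_pos hε).le (by linarith) (hlog _ hre.ge (by rw [hre]; linarith))
    rwa [hre, add_assoc θ, add_halves, show (((θ + ε / 2 : ℝ) : ℂ) + y * I).im = y by simp] at hle
  have hintegral := norm_integral_le_of_norm_le ((integrable_one_add_abs_rpow_neg hr).const_mul
    ((12 * n) ^ (θ + ε) * C)) (ae_of_all _ hintegrand)
  rw [integral_const_mul] at hintegral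
  calc |Chebyshev.psi n - n - 1 / 2| = ‖((Chebyshev.psi n - n - 1 / 2 : ℝ) : ℂ)‖ := by
        rw [norm_real, Real.norm_eq_abs]
    _ ≤ 1 / (2 * Real.pi) * ((12 * n) ^ (θ + ε) * C * J) := by
        rw [psi_sub_eq_integral hθ hθ₀ hθ₁ (σ := θ + ε / 2) (by linarith) (by linarith) hn,
          norm_smul, Real.norm_of_nonneg hpi.le]
        gcongr
    _ = 1 / (2 * Real.pi) * (12 ^ (θ + ε) * C * J) * (n : ℝ) ^ (θ + ε) := by
        rw [Real.mul_rpow (by norm_num) (Nat.cast_nonneg n)]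
        ring

lemma growthOrderLE_psi_sub_self_of_le_one (hθ₁ : θ ≤ 1) :
    GrowthOrderLE θ fun x => Chebyshev.psi x - x := by
  intro ε hε
  have hmin : 0 < min ε 1 := lt_min hε one_pos
  obtain ⟨C, hC, hnat⟩ := exists_abs_psi_natCast_sub_le hθ hθ₀ hθ₁ hmin (min_le_right ε 1)
  refine ⟨C + 1, fun x hx => ?_⟩
  have hfloor : (⌊x⌋₊ : ℝ) ≤ x := Nat.floor_le (by linarith)
  have hx₁ : 1 ≤ x := by linarith
  have hpow : (⌊x⌋₊ : ℝ) ^ (θ + min ε 1) ≤ x ^ (θ + ε) :=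
    calc (⌊x⌋₊ : ℝ) ^ (θ + min ε 1) ≤ x ^ (θ + min ε 1) := by gcongr
      _ ≤ x ^ (θ + ε) := by gcongr; exact min_le_left ε 1
  have hone : 1 ≤ x ^ (θ + ε) := Real.one_le_rpow hx₁ (by linarith)
  have hfract : |⌊x⌋₊ + 1 / 2 - x| ≤ 1 :=
    abs_le.2 ⟨by linarith [Nat.lt_floor_add_one x], by linarith⟩
  calc |Chebyshev.psi x - x|
      = |(Chebyshev.psi ⌊x⌋₊ - ⌊x⌋₊ - 1 / 2) + (⌊x⌋₊ + 1 / 2 - x)| := by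
        rw [Chebyshev.psi_eq_psi_coe_floor x]
        ring_nf
    _ ≤ C * (⌊x⌋₊ : ℝ) ^ (θ + min ε 1) + 1 :=
        (abs_add_le _ _).trans
          (add_le_add (hnat _ (Nat.le_floor (by exact_mod_cast hx))) hfract)
    _ ≤ C * x ^ (θ + ε) + x ^ (θ + ε) := by gcongr
    _ = (C + 1) * x ^ (θ + ε) := by ring

end ZeroFree

lemma growthOrderLE_psi_sub_self_of_one_le (hθ : 1 ≤ θ) :
    GrowthOrderLE θ fun x => Chebyshev.psi x - x :=
  GrowthOrderLE.of_le_rpow hθ fun x hx => by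
    simpa [psiError, ← ofReal_sub] using norm_psiError_le (show 1 < x by linarith)

lemma zetaZeroFree_iff_growthOrderLE_psi_sub_self (hθ : 1 / 2 ≤ θ) :
    ZetaZeroFree θ ↔ GrowthOrderLE θ fun x => Chebyshev.psi x - x := by
  refine ⟨fun hfree => ?_, zetaZeroFree_of_growthOrderLE_psi_sub_self (by linarith)⟩
  rcases le_total θ 1 with hθ₁ | hθ₁
  · exact growthOrderLE_psi_sub_self_of_le_one hfree hθ hθ₁
  · exact growthOrderLE_psi_sub_self_of_one_le hθ₁

end PsiError

theorem riemannHypothesis_iff_pi_sub_Li_le_general {θ : ℝ} (hθ : 1 / 2 ≤ θ) :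
    ZetaZeroFree θ ↔ ∀ ε : ℝ, 0 < ε → ∃ C : ℝ, ∀ x : ℝ, 2 ≤ x →
      |primePi x - Li x| ≤ C * x ^ (θ + ε) :=
  (zetaZeroFree_iff_growthOrderLE_psi_sub_self hθ).trans (growthOrderLE_psi_sub_self_iff hθ)

/-- The Riemann hypothesis holds if and only if for every `ε > 0` there is a constant `C`
with `|π(x) − Li(x)| ≤ C·x^{1/2+ε}` for all real `x ≥ 2`. -/
theorem riemannHypothesis_iff_pi_sub_Li_le :
    RiemannHypothesis ↔
      ∀ ε : ℝ, 0 < ε → ∃ C : ℝ, ∀ x : ℝ, 2 ≤ x →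
        |primePi x - Li x| ≤ C * x ^ ((1 : ℝ) / 2 + ε) := by
  exact riemannHypothesis_iff_zetaZeroFree.trans
    (riemannHypothesis_iff_pi_sub_Li_le_general le_rfl)
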